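/- arXiv:1906.00135 — 3 statements merged into one kernel-verified Lean document; each statement's English description precedes it below -/
import Mathlib

section
/- For every finite simple graph G with at least one vertex, γ_{1/2}(G □ P_2) ≥ γ_{1/2}(G), where P_2 is the path on two vertices. -/
/-!
Let `V` and `W` be the vertex sets of `G` and `H`. The projection `π : V × W → V` maps each closed
neighbourhood of `G □ H` into the closed neighbourhood of the projected vertex, so
`N[S] ⊆ N[π(S)] × W` and `|N[S]| ≤ |N[π(S)]| |W|`. As `G □ H` has `|V| |W|` vertices, `π(S)`
dominates at least as large a proportion of `G` as `S` does of `G □ H`, and `|π(S)| ≤ |S|`.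
-/

open SimpleGraph

/-- The closed neighborhood `N[S]` of a set of vertices `S`:
all vertices equal or adjacent to some vertex of `S`. -/
def closedNbhd {V : Type*} (G : SimpleGraph V) (S : Set V) : Set V :=
  {w | ∃ u ∈ S, w = u ∨ G.Adj u w}

/-- `S` is a `p`-dominating set of `G` if `N[S]` contains at least a proportion `p`
of the vertices. -/
def IsPDomSet {V : Type*} [Fintype V] (G : SimpleGraph V) (p : ℝ) (S : Set V) : Prop :=
  p * (Fintype.card V : ℝ) ≤ ((closedNbhd G S).ncard : ℝ)

/-- The `p`-domination number `γ_p(G)`: the minimum cardinality of a `p`-dominating set. -/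
noncomputable def pDomNum {V : Type*} [Fintype V] (G : SimpleGraph V) (p : ℝ) : ℕ :=
  sInf {k : ℕ | ∃ S : Set V, IsPDomSet G p S ∧ S.ncard = k}

/-- `S` is a `γ_p`-set: a `p`-dominating set of minimum cardinality `γ_p(G)`. -/
def IsGammaPSet {V : Type*} [Fintype V] (G : SimpleGraph V) (p : ℝ) (S : Set V) : Prop :=
  IsPDomSet G p S ∧ S.ncard = pDomNum G p

/-- `v` belongs to the `p`-influencing set of `G`, i.e. the union of all `γ_p`-sets. -/
def InInfluence {V : Type*} [Fintype V] (G : SimpleGraph V) (p : ℝ) (v : V) : Prop :=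
  ∃ S : Set V, IsGammaPSet G p S ∧ v ∈ S

section ClosedNbhd

variable {V W : Type*} (G : SimpleGraph V) (H : SimpleGraph W)

lemma subset_closedNbhd (S : Set V) : S ⊆ closedNbhd G S :=
  fun v hv => ⟨v, hv, Or.inl rfl⟩

lemma closedNbhd_boxProd_subset (S : Set (V × W)) :
    closedNbhd (G □ H) S ⊆ closedNbhd G (Prod.fst '' S) ×ˢ Set.univ := by
  rintro ⟨v, w⟩ ⟨u, hu, h⟩
  refine ⟨⟨u.1, Set.mem_image_of_mem _ hu, ?_⟩, Set.mem_univ w⟩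
  rcases h with rfl | h
  · exact Or.inl rfl
  · rcases boxProd_adj.1 h with ⟨hadj, -⟩ | ⟨-, heq⟩
    · exact Or.inr hadj
    · exact Or.inl heq.symm

lemma ncard_closedNbhd_boxProd_le [Finite V] [Finite W] (S : Set (V × W)) :
    (closedNbhd (G □ H) S).ncard ≤ (closedNbhd G (Prod.fst '' S)).ncard * Nat.card W :=
  calc (closedNbhd (G □ H) S).ncard
      ≤ (closedNbhd G (Prod.fst '' S) ×ˢ (Set.univ : Set W)).ncard :=
        Set.ncard_le_ncard (closedNbhd_boxProd_subset G H S)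
    _ = (closedNbhd G (Prod.fst '' S)).ncard * Nat.card W := by
        rw [Set.ncard_prod, Set.ncard_univ]

end ClosedNbhd

section PDomination

variable {V W : Type*} [Fintype V] [Fintype W] (G : SimpleGraph V) {H : SimpleGraph W} {p : ℝ}

lemma isPDomSet_univ (hp : p ≤ 1) : IsPDomSet G p Set.univ := by
  have huniv : closedNbhd G Set.univ = Set.univ := Set.univ_subset_iff.1 (subset_closedNbhd G _)
  rw [IsPDomSet, huniv, Set.ncard_univ, Nat.card_eq_fintype_card]
  exact mul_le_of_le_one_left (Nat.cast_nonneg _) hp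

lemma exists_isGammaPSet (hp : p ≤ 1) : ∃ S, IsGammaPSet G p S :=
  Nat.sInf_mem (s := {k | ∃ S, IsPDomSet G p S ∧ S.ncard = k})
    ⟨_, Set.univ, isPDomSet_univ G hp, rfl⟩

variable {G}

lemma IsPDomSet.pDomNum_le_ncard {S : Set V} (hS : IsPDomSet G p S) : pDomNum G p ≤ S.ncard :=
  Nat.sInf_le ⟨S, hS, rfl⟩

lemma IsPDomSet.image_fst [Nonempty W] {S : Set (V × W)} (hS : IsPDomSet (G □ H) p S) :
    IsPDomSet G p (Prod.fst '' S) := by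
  have hW : (0 : ℝ) < Fintype.card W := Nat.cast_pos.2 Fintype.card_pos
  refine le_of_mul_le_mul_right ?_ hW
  calc p * Fintype.card V * Fintype.card W
      = p * Fintype.card (V × W) := by rw [Fintype.card_prod, Nat.cast_mul, mul_assoc]
    _ ≤ (closedNbhd (G □ H) S).ncard := hS
    _ ≤ (closedNbhd G (Prod.fst '' S)).ncard * Fintype.card W := by
        rw [← Nat.card_eq_fintype_card]
        exact_mod_cast ncard_closedNbhd_boxProd_le G H S

end PDomination

theorem stmt3_general {V W : Type*} [Fintype V] [Fintype W] [Nonempty W] (G : SimpleGraph V)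
    (H : SimpleGraph W) {p : ℝ} (hp : p ≤ 1) :
    pDomNum G p ≤ pDomNum (G □ H) p := by
  obtain ⟨S, hS, hcard⟩ := exists_isGammaPSet (G □ H) hp
  calc pDomNum G p ≤ (Prod.fst '' S).ncard := hS.image_fst.pDomNum_le_ncard
    _ ≤ S.ncard := Set.ncard_image_le
    _ = pDomNum (G □ H) p := hcard

theorem stmt3 {V : Type*} [Fintype V] [Nonempty V] (G : SimpleGraph V) :
    pDomNum G (1/2) ≤ pDomNum (G □ pathGraph 2) (1/2) :=
  stmt3_general G (pathGraph 2) (by norm_num)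
end

section
/- Let G be a finite simple graph on n ≥ 1 vertices with minimum degree δ(G). If p is a real number with 0 < p ≤ (δ(G)+1)/n, then the p-influencing set of G is the entire vertex set V; that is, every vertex of G belongs to some γ_p-set. -/
open SimpleGraph

/-! As `p * n > 0`, the empty set is not `p`-dominating, so a `p`-dominating singleton is always a
`γ_p`-set; and `{v}` is `p`-dominating because `|N[v]| = deg v + 1 ≥ δ(G) + 1 ≥ p * n`. -/

section ClosedNbhd

variable {V : Type*} (G : SimpleGraph V)

lemma closedNbhd_empty : closedNbhd G ∅ = ∅ := by
  simp [closedNbhd]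

lemma closedNbhd_singleton (v : V) : closedNbhd G {v} = insert v (G.neighborSet v) := by
  ext w
  simp [closedNbhd]

lemma ncard_closedNbhd_singleton {v : V} (hv : (G.neighborSet v).Finite) :
    (closedNbhd G {v}).ncard = (G.neighborSet v).ncard + 1 := by
  rw [closedNbhd_singleton, Set.ncard_insert_of_notMem G.notMem_neighborSet_self hv]

end ClosedNbhd

section PDomination

variable {V : Type*} [Fintype V] {G : SimpleGraph V} {p : ℝ}

lemma isPDomSet_empty_iff [Nonempty V] : IsPDomSet G p ∅ ↔ p ≤ 0 := by
  have hn : (0 : ℝ) < Fintype.card V := Nat.cast_pos.mpr Fintype.card_pos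
  rw [IsPDomSet, closedNbhd_empty, Set.ncard_empty, Nat.cast_zero,
    ← not_lt, mul_pos_iff_of_pos_right hn, not_lt]

lemma isPDomSet_singleton_iff {v : V} :
    IsPDomSet G p {v} ↔ p * Fintype.card V ≤ (G.neighborSet v).ncard + 1 := by
  rw [IsPDomSet, ncard_closedNbhd_singleton G (Set.toFinite _), Nat.cast_add_one]

lemma IsPDomSet.nonempty [Nonempty V] {S : Set V} (hS : IsPDomSet G p S) (hp : 0 < p) :
    S.Nonempty := by
  rw [Set.nonempty_iff_ne_empty]
  rintro rfl
  exact hp.not_ge (isPDomSet_empty_iff.mp hS)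

lemma isGammaPSet_iff_forall_ncard_le {S : Set V} :
    IsGammaPSet G p S ↔ IsPDomSet G p S ∧ ∀ T, IsPDomSet G p T → S.ncard ≤ T.ncard := by
  refine and_congr_right fun hS => ⟨fun hcard T hT => ?_, fun hmin => ?_⟩
  · exact hcard.trans_le (Nat.sInf_le ⟨T, hT, rfl⟩)
  · have hleast : IsLeast {k | ∃ T, IsPDomSet G p T ∧ T.ncard = k} S.ncard :=
      ⟨⟨S, hS, rfl⟩, by rintro _ ⟨T, hT, rfl⟩; exact hmin T hT⟩
    exact hleast.csInf_eq.symm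

lemma IsPDomSet.isGammaPSet_singleton {v : V} (hv : IsPDomSet G p {v}) (hp : 0 < p) :
    IsGammaPSet G p {v} := by
  have : Nonempty V := ⟨v⟩
  refine isGammaPSet_iff_forall_ncard_le.mpr ⟨hv, fun T hT => ?_⟩
  rw [Set.ncard_singleton]
  exact (Set.ncard_pos (Set.toFinite T)).mpr (hT.nonempty hp)

lemma inInfluence_of_mul_card_le_ncard_neighborSet {v : V} (hp : 0 < p)
    (hv : p * Fintype.card V ≤ (G.neighborSet v).ncard + 1) : InInfluence G p v :=
  ⟨{v}, (isPDomSet_singleton_iff.mpr hv).isGammaPSet_singleton hp, Set.mem_singleton v⟩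

end PDomination

theorem stmt11 {V : Type*} [Fintype V] [Nonempty V] (G : SimpleGraph V)
    (p : ℝ) (hp0 : 0 < p)
    (hp : p ≤ ((Finset.univ.inf' Finset.univ_nonempty
        (fun v : V => (G.neighborSet v).ncard) : ℕ) + 1) / (Fintype.card V : ℝ)) :
    ∀ v : V, InInfluence G p v := by
  intro v
  have hn : (0 : ℝ) < Fintype.card V := Nat.cast_pos.mpr Fintype.card_pos
  have hδ : Finset.univ.inf' Finset.univ_nonempty (fun v : V => (G.neighborSet v).ncard) ≤
      (G.neighborSet v).ncard :=
    Finset.inf'_le _ (Finset.mem_univ v)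
  apply inInfluence_of_mul_card_le_ncard_neighborSet hp0
  calc p * Fintype.card V
      ≤ (Finset.univ.inf' Finset.univ_nonempty (fun v : V => (G.neighborSet v).ncard) : ℕ) + 1 :=
        (le_div_iff₀ hn).mp hp
    _ ≤ (G.neighborSet v).ncard + 1 := by gcongr
end

section
/- Let P_n be the path with vertices v_1, …, v_n (v_i adjacent to v_{i+1}), where n ≥ 3 and n ≡ 0 (mod 3). Then: (i) for every integer k ≥ 0 with (3k+1)/n ≤ 1, the p-influencing set of P_n for p = (3k+1)/n and for p = (3k+2)/n (when (3k+2)/n ≤ 1) is the whole vertex set {v_1, …, v_n}; (ii) for every integer k ≥ 1 with 3k < n, the p-influencing set of P_n for p = 3k/n is {v_2, v_3, …, v_{n−1}}; and (iii) for p = 1, the p-influencing set of P_n is {v_2, v_5, v_8, …, v_{n−1}} (the vertices v_i with i ≡ 2 (mod 3)). -/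
/-!
In a graph whose closed neighborhoods have at most `d` vertices, `|N[S]| ≤ d * |S|`, with equality
exactly when `S` is a packing (its members have disjoint closed neighborhoods) all of whose members
have a closed neighborhood of size `d`. So if one such tight packing has `k` vertices, then for
`p = d * k / |V|` the `γ_p`-sets are precisely the tight packings with `k` vertices.

On a path `d = 3`, every residue class of indices modulo 3 is a packing, and a set is tight when in
addition it avoids both endpoints. If `3 ∣ n`, each class has `n / 3` vertices and contains at most
one endpoint, so its subsets dominate at least `3 * |S| - 1` vertices. This settles every `p < 1`.
For `p = 1` the tight packing covers each vertex exactly once; since it avoids the first vertex,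
this determines its members one after the other from left to right.
-/

open SimpleGraph

section Packing

variable {V : Type*} {G : SimpleGraph V} {S T : Set V} {d : ℕ} {w : V}

lemma mem_closedNbhd_iff : w ∈ closedNbhd G S ↔ ∃ u ∈ S, w ∈ closedNbhd G {u} := by
  simp [closedNbhd]

lemma closedNbhd_eq_biUnion (G : SimpleGraph V) (S : Set V) :
    closedNbhd G S = ⋃ u ∈ S, closedNbhd G {u} := by
  ext w
  simp only [mem_closedNbhd_iff (S := S), Set.mem_iUnion₂, exists_prop]

lemma closedNbhd_mono (h : S ⊆ T) : closedNbhd G S ⊆ closedNbhd G T :=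
  fun _ ⟨u, hu, huw⟩ => ⟨u, h hu, huw⟩

lemma closedNbhd_insert (G : SimpleGraph V) (u : V) (S : Set V) :
    closedNbhd G (insert u S) = closedNbhd G {u} ∪ closedNbhd G S := by
  rw [closedNbhd_eq_biUnion, Set.biUnion_insert, ← closedNbhd_eq_biUnion]

lemma closedNbhd_singleton_nonempty (G : SimpleGraph V) (u : V) : (closedNbhd G {u}).Nonempty :=
  ⟨u, u, rfl, Or.inl rfl⟩

/-- A packing of a graph: a set of vertices whose closed neighborhoods are pairwise disjoint. -/
def IsPacking (G : SimpleGraph V) (S : Set V) : Prop :=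
  S.PairwiseDisjoint fun u => closedNbhd G {u}

lemma IsPacking.subset (hT : IsPacking G T) (h : S ⊆ T) : IsPacking G S :=
  Set.PairwiseDisjoint.subset hT h

/-- A packing all of whose members have a closed neighborhood of size `d`. When `d` bounds the size
of every closed neighborhood, these are the sets that dominate as many vertices as their
cardinality permits. -/
structure IsTightPacking (G : SimpleGraph V) (d : ℕ) (S : Set V) : Prop where
  isPacking : IsPacking G S
  ncard_closedNbhd_singleton : ∀ u ∈ S, (closedNbhd G {u}).ncard = d

variable [Finite V]

lemma ncard_closedNbhd_le_mul (hd : ∀ u, (closedNbhd G {u}).ncard ≤ d) (S : Set V) :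
    (closedNbhd G S).ncard ≤ d * S.ncard := by
  lift S to Finset V using S.toFinite
  rw [closedNbhd_eq_biUnion, Set.ncard_coe_finset, mul_comm]
  exact (S.set_ncard_biUnion_le _).trans (S.sum_le_card_nsmul _ _ fun u _ => hd u)

lemma IsPacking.mul_ncard_le (hS : IsPacking G S)
    (hd : ∀ u ∈ S, d ≤ (closedNbhd G {u}).ncard + 1) :
    d * S.ncard ≤ (closedNbhd G S).ncard + {u ∈ S | (closedNbhd G {u}).ncard < d}.ncard := by
  classical
  lift S to Finset V using S.toFinite
  have hN : (closedNbhd G S).ncard = ∑ u ∈ S, (closedNbhd G {u}).ncard := by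
    rw [closedNbhd_eq_biUnion, S.finite_toSet.ncard_biUnion (fun _ _ => Set.toFinite _) hS,
      finsum_mem_coe_finset]
  have hL : {u ∈ (S : Set V) | (closedNbhd G {u}).ncard < d}.ncard =
      ∑ u ∈ S, if (closedNbhd G {u}).ncard < d then 1 else 0 := by
    rw [← Finset.card_filter, ← Set.ncard_coe_finset, Finset.coe_filter]
    rfl
  rw [hN, hL, ← Finset.sum_add_distrib, Set.ncard_coe_finset, mul_comm]
  refine S.card_nsmul_le_sum _ _ fun u hu => ?_
  have := hd u hu
  split_ifs <;> omega

lemma IsTightPacking.mul_ncard_le (hS : IsTightPacking G d S) :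
    d * S.ncard ≤ (closedNbhd G S).ncard := by
  have hd := hS.ncard_closedNbhd_singleton
  have hL : {u ∈ S | (closedNbhd G {u}).ncard < d} = ∅ :=
    Set.eq_empty_of_forall_notMem fun u hu => hu.2.ne (hd u hu.1)
  simpa only [hL, Set.ncard_empty, add_zero] using
    hS.isPacking.mul_ncard_le fun u hu => (hd u hu).ge.trans (Nat.le_succ _)

lemma isTightPacking_of_mul_ncard_le (hd : ∀ u, (closedNbhd G {u}).ncard ≤ d)
    (hS : d * S.ncard ≤ (closedNbhd G S).ncard) : IsTightPacking G d S := by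
  have split (u) (hu : u ∈ S) : (closedNbhd G {u}).ncard = d ∧
      Disjoint (closedNbhd G {u}) (closedNbhd G (S \ {u})) := by
    have hunion : closedNbhd G {u} ∪ closedNbhd G (S \ {u}) = closedNbhd G S := by
      rw [← closedNbhd_insert, Set.insert_sdiff_self_of_mem hu]
    have hle := Set.ncard_union_le (closedNbhd G {u}) (closedNbhd G (S \ {u}))
    have hrest := ncard_closedNbhd_le_mul hd (S \ {u})
    have hu_le := hd u
    rw [← Set.ncard_sdiff_singleton_add_one hu, mul_add_one] at hS
    rw [← Set.ncard_union_eq_iff, hunion]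
    rw [hunion] at hle
    omega
  refine ⟨fun u hu v hv huv => ?_, fun u hu => (split u hu).1⟩
  have hsub : {v} ⊆ S \ {u} := Set.singleton_subset_iff.2 ⟨hv, huv.symm⟩
  exact (split u hu).2.mono_right (closedNbhd_mono hsub)

end Packing

section MinimumPDomSets

variable {V : Type*} [Fintype V] {G : SimpleGraph V} {S T : Set V} {p : ℝ} {d q : ℕ}

lemma isPDomSet_div_card_iff [Nonempty V] :
    IsPDomSet G ((q : ℝ) / Fintype.card V) S ↔ q ≤ (closedNbhd G S).ncard := by
  rw [IsPDomSet, div_mul_cancel₀ _ (Nat.cast_ne_zero.2 Fintype.card_ne_zero), Nat.cast_le]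

lemma isGammaPSet_iff : IsGammaPSet G p S ↔
    IsPDomSet G p S ∧ ∀ T, IsPDomSet G p T → S.ncard ≤ T.ncard := by
  refine and_congr_right fun hS => ⟨fun h T hT => ?_, fun h => le_antisymm ?_ ?_⟩
  · exact h.trans_le (Nat.sInf_le ⟨T, hT, rfl⟩)
  · exact le_csInf ⟨_, S, hS, rfl⟩ (by rintro _ ⟨T, hT, rfl⟩; exact h T hT)
  · exact Nat.sInf_le ⟨S, hS, rfl⟩

variable [Nonempty V]

lemma isGammaPSet_of_mul_ncard_lt (hd : ∀ u, (closedNbhd G {u}).ncard ≤ d)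
    (hq : q ≤ (closedNbhd G S).ncard) (hS : d * S.ncard < q + d) :
    IsGammaPSet G ((q : ℝ) / Fintype.card V) S := by
  refine isGammaPSet_iff.2 ⟨isPDomSet_div_card_iff.2 hq, fun T hT => ?_⟩
  have hlt : d * S.ncard < d * (T.ncard + 1) := calc
    d * S.ncard < q + d := hS
    _ ≤ d * T.ncard + d :=
      Nat.add_le_add_right ((isPDomSet_div_card_iff.1 hT).trans (ncard_closedNbhd_le_mul hd T)) d
    _ = d * (T.ncard + 1) := (mul_add_one _ _).symm
  exact Nat.lt_succ_iff.1 (lt_of_mul_lt_mul_left' hlt)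

lemma isGammaPSet_iff_isTightPacking (hd : ∀ u, (closedNbhd G {u}).ncard ≤ d)
    (hT : IsTightPacking G d T) :
    IsGammaPSet G (((d * T.ncard : ℕ) : ℝ) / Fintype.card V) S ↔
      IsTightPacking G d S ∧ S.ncard = T.ncard := by
  have hd_pos : 0 < d :=
    ((Set.ncard_pos (Set.toFinite _)).2
      (closedNbhd_singleton_nonempty G (Classical.arbitrary V))).trans_le (hd _)
  have gamma {U : Set V} (hU : IsTightPacking G d U) (hUT : U.ncard = T.ncard) :
      IsGammaPSet G (((d * T.ncard : ℕ) : ℝ) / Fintype.card V) U :=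
    isGammaPSet_of_mul_ncard_lt hd (hUT ▸ hU.mul_ncard_le) (by rw [hUT]; omega)
  refine ⟨fun hS => ?_, fun hS => gamma hS.1 hS.2⟩
  have hcard : S.ncard = T.ncard := hS.2.trans (gamma hT rfl).2.symm
  exact ⟨isTightPacking_of_mul_ncard_le hd (hcard ▸ isPDomSet_div_card_iff.1 hS.1), hcard⟩

end MinimumPDomSets

section Path

variable {n : ℕ} {u v w : Fin n}

lemma mem_closedNbhd_singleton_pathGraph :
    w ∈ closedNbhd (pathGraph n) {u} ↔ w.val ≤ u.val + 1 ∧ u.val ≤ w.val + 1 := by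
  simp only [closedNbhd, Set.mem_singleton_iff, exists_eq_left, Set.mem_ofPred_eq, pathGraph_adj]
  omega

lemma ncard_closedNbhd_singleton_pathGraph (u : Fin n) :
    (closedNbhd (pathGraph n) {u}).ncard = min (u.val + 2) n - (u.val - 1) := by
  have himage : Fin.val '' closedNbhd (pathGraph n) {u} =
      Finset.Ico (u.val - 1) (min (u.val + 2) n) := by
    ext i
    simp only [Set.mem_image, mem_closedNbhd_singleton_pathGraph, Finset.coe_Ico, Set.mem_Ico]
    exact ⟨by rintro ⟨w, hw, rfl⟩; omega, fun hi => ⟨⟨i, by omega⟩, by simp only; omega, rfl⟩⟩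
  rw [← Set.ncard_image_of_injective _ Fin.val_injective, himage, Set.ncard_coe_finset,
    Nat.card_Ico]

lemma ncard_closedNbhd_singleton_pathGraph_le_three (u : Fin n) :
    (closedNbhd (pathGraph n) {u}).ncard ≤ 3 := by
  rw [ncard_closedNbhd_singleton_pathGraph]
  omega

lemma ncard_closedNbhd_singleton_pathGraph_eq_three_iff :
    (closedNbhd (pathGraph n) {u}).ncard = 3 ↔ 1 ≤ u.val ∧ u.val ≤ n - 2 := by
  rw [ncard_closedNbhd_singleton_pathGraph]
  omega

/-- The vertices of the path on `Fin n` whose (0-based) index is congruent to `r` modulo 3. -/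
def residueClass (n r : ℕ) : Set (Fin n) :=
  {u | u.val % 3 = r % 3}

lemma isPacking_residueClass (n r : ℕ) : IsPacking (pathGraph n) (residueClass n r) := by
  intro u hu v hv huv
  refine Set.disjoint_left.2 fun w hwu hwv => huv (Fin.ext ?_)
  rw [mem_closedNbhd_singleton_pathGraph] at hwu hwv
  have hmod : u.val % 3 = v.val % 3 := hu.trans hv.symm
  omega

lemma isTightPacking_of_subset_residueClass {r : ℕ} {S : Set (Fin n)} (hS : S ⊆ residueClass n r)
    (hint : ∀ u ∈ S, 1 ≤ u.val ∧ u.val ≤ n - 2) : IsTightPacking (pathGraph n) 3 S where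
  isPacking := (isPacking_residueClass n r).subset hS
  ncard_closedNbhd_singleton u hu := ncard_closedNbhd_singleton_pathGraph_eq_three_iff.2 (hint u hu)

lemma ncard_residueClass (hn : 3 ∣ n) (r : ℕ) : (residueClass n r).ncard = n / 3 := by
  have himage : Fin.val '' residueClass n r = {i ∈ Finset.range n | i ≡ r [MOD 3]} := by
    ext i
    simp only [Set.mem_image, Finset.coe_filter, Finset.mem_range]
    exact ⟨by rintro ⟨u, hu, rfl⟩; exact ⟨u.isLt, hu⟩, fun hi => ⟨⟨i, hi.1⟩, hi.2, rfl⟩⟩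
  rw [← Set.ncard_image_of_injective _ Fin.val_injective, himage, Set.ncard_coe_finset,
    ← Nat.count_eq_card_filter_range, Nat.count_modEq_card _ three_pos, Nat.mod_eq_zero_of_dvd hn,
    if_neg (Nat.not_lt_zero _), add_zero]

lemma ncard_residueClass_endpoints_le_one (hn : 3 ∣ n) (r : ℕ) :
    {u ∈ residueClass n r | (closedNbhd (pathGraph n) {u}).ncard < 3}.ncard ≤ 1 := by
  rw [Set.ncard_le_one_iff]
  rintro u v ⟨hu, hu_end⟩ ⟨hv, hv_end⟩
  rw [ncard_closedNbhd_singleton_pathGraph] at hu_end hv_end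
  have hmod : u.val % 3 = v.val % 3 := hu.trans hv.symm
  refine Fin.ext ?_
  omega

lemma three_mul_ncard_le_of_subset_residueClass (hn : 3 ∣ n) {r : ℕ} {S : Set (Fin n)}
    (hS : S ⊆ residueClass n r) : 3 * S.ncard ≤ (closedNbhd (pathGraph n) S).ncard + 1 := by
  have hpacking := ((isPacking_residueClass n r).subset hS).mul_ncard_le (d := 3) fun u _ => by
    rw [ncard_closedNbhd_singleton_pathGraph]
    omega
  have hsub : {u ∈ S | (closedNbhd (pathGraph n) {u}).ncard < 3} ⊆
      {u ∈ residueClass n r | (closedNbhd (pathGraph n) {u}).ncard < 3} :=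
    fun _ hu => ⟨hS hu.1, hu.2⟩
  have hend := (Set.ncard_le_ncard hsub).trans (ncard_residueClass_endpoints_le_one hn r)
  omega

lemma exists_isTightPacking_pathGraph (hn : 3 ∣ n) {k : ℕ} (hk : 1 ≤ k) (hkn : 3 * k < n)
    (hv : 1 ≤ v.val ∧ v.val ≤ n - 2) :
    ∃ S, v ∈ S ∧ IsTightPacking (pathGraph n) 3 S ∧ S.ncard = k := by
  let A := {u ∈ residueClass n v | 1 ≤ u.val ∧ u.val ≤ n - 2}
  have hcard : k ≤ A.ncard := by
    have hsplit := Set.ncard_sdiff_add_ncard_of_subset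
      (Set.sep_subset (residueClass n v) fun u => (closedNbhd (pathGraph n) {u}).ncard < 3)
    have hend := ncard_residueClass_endpoints_le_one hn v
    have hsub : residueClass n v \ {u ∈ residueClass n v |
        (closedNbhd (pathGraph n) {u}).ncard < 3} ⊆ A := fun u hu =>
      ⟨hu.1, ncard_closedNbhd_singleton_pathGraph_eq_three_iff.1
        (le_antisymm (ncard_closedNbhd_singleton_pathGraph_le_three u)
          (not_lt.1 fun h => hu.2 ⟨hu.1, h⟩))⟩
    have := Set.ncard_le_ncard hsub
    rw [ncard_residueClass hn] at hsplit
    omega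
  obtain ⟨S, hvS, hSA, hS⟩ := Set.exists_subsuperset_card_eq
    (Set.singleton_subset_iff.2 (show v ∈ A from ⟨rfl, hv⟩)) (by simpa using hk) hcard
  exact ⟨S, hvS rfl, isTightPacking_of_subset_residueClass (fun u hu => (hSA hu).1)
    fun u hu => (hSA hu).2, hS⟩

theorem inInfluence_pathGraph_of_not_dvd (hn : 3 ∣ n) {q : ℕ} (hq : ¬ 3 ∣ q) (hqn : q ≤ n)
    (v : Fin n) : InInfluence (pathGraph n) ((q : ℝ) / n) v := by
  have : Nonempty (Fin n) := ⟨v⟩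
  have hcard := ncard_residueClass hn v
  obtain ⟨S, hvS, hSA, hS⟩ := Set.exists_subsuperset_card_eq (n := q / 3 + 1)
    (Set.singleton_subset_iff.2 (show v ∈ residueClass n v from rfl)) (by simp) (by omega)
  have hN := three_mul_ncard_le_of_subset_residueClass hn hSA
  have hgamma : IsGammaPSet (pathGraph n) ((q : ℝ) / Fintype.card (Fin n)) S :=
    isGammaPSet_of_mul_ncard_lt ncard_closedNbhd_singleton_pathGraph_le_three
      (by omega) (by omega)
  rw [Fintype.card_fin] at hgamma
  exact ⟨S, hgamma, hvS rfl⟩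

theorem inInfluence_pathGraph_three_mul_iff (hn : 3 ∣ n) {k : ℕ} (hk : 1 ≤ k) (hkn : 3 * k < n) :
    InInfluence (pathGraph n) (((3 * k : ℕ) : ℝ) / n) v ↔ 1 ≤ v.val ∧ v.val ≤ n - 2 := by
  have : Nonempty (Fin n) := ⟨v⟩
  obtain ⟨T, -, hT, hTk⟩ := exists_isTightPacking_pathGraph hn hk hkn
    (v := ⟨1, by omega⟩) ⟨le_rfl, by simp only; omega⟩
  have hgamma (S) : IsGammaPSet (pathGraph n) (((3 * k : ℕ) : ℝ) / n) S ↔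
      IsTightPacking (pathGraph n) 3 S ∧ S.ncard = k := by
    simpa only [hTk, Fintype.card_fin] using
      isGammaPSet_iff_isTightPacking (S := S) ncard_closedNbhd_singleton_pathGraph_le_three hT
  constructor
  · rintro ⟨S, hS, hvS⟩
    exact ncard_closedNbhd_singleton_pathGraph_eq_three_iff.1
      (((hgamma S).1 hS).1.ncard_closedNbhd_singleton v hvS)
  · intro hv
    obtain ⟨S, hvS, hS⟩ := exists_isTightPacking_pathGraph hn hk hkn hv
    exact ⟨S, (hgamma S).2 hS, hvS⟩

-- The reason is that `v - 1` has exactly one dominator among `v - 2`, `v - 1` and `v`.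
lemma IsPacking.mem_iff_forall_lt_of_pathGraph {S : Set (Fin n)} (hS : IsPacking (pathGraph n) S)
    (hdom : closedNbhd (pathGraph n) S = Set.univ) (hv : 0 < v.val) :
    v ∈ S ↔ ∀ u ∈ S, u < v → u.val + 2 < v.val := by
  let w : Fin n := ⟨v.val - 1, by omega⟩
  constructor
  · intro hvS u hu huv
    by_contra! hclose
    refine Set.not_disjoint_iff.2 ⟨w, ?_, ?_⟩ (hS hu hvS huv.ne) <;>
      rw [mem_closedNbhd_singleton_pathGraph] <;> simp only [w] <;> omega
  · intro hfar
    obtain ⟨u, hu, hwu⟩ : ∃ u ∈ S, w ∈ closedNbhd (pathGraph n) {u} :=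
      mem_closedNbhd_iff.1 (hdom.symm ▸ Set.mem_univ w)
    rw [mem_closedNbhd_singleton_pathGraph] at hwu
    simp only [w] at hwu
    have huv : u = v := by
      by_contra hne
      have := hfar u hu (by omega)
      omega
    exact huv ▸ hu

lemma IsPacking.eq_residueClass_one {S : Set (Fin n)} (hS : IsPacking (pathGraph n) S)
    (hdom : closedNbhd (pathGraph n) S = Set.univ) (hpos : ∀ u ∈ S, 0 < u.val) :
    S = residueClass n 1 := by
  ext v
  change v ∈ S ↔ v.val % 3 = 1
  induction v using WellFoundedLT.induction with
  | ind v ih =>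
    obtain hv | hv := Nat.eq_zero_or_pos v.val
    · exact iff_of_false (fun hvS => (hpos v hvS).ne' hv) (by omega)
    rw [hS.mem_iff_forall_lt_of_pathGraph hdom hv]
    constructor
    · intro hfar
      by_contra hne
      -- The nearest smaller index congruent to 1 is `v - 1` or `v - 2`.
      let u : Fin n := ⟨v.val - (v.val + 2) % 3, by omega⟩
      have huv : u < v := by simp only [u, Fin.lt_def]; omega
      have := hfar u ((ih u huv).2 (by simp only [u]; omega)) huv
      simp only [u] at this
      omega
    · intro hmod u hu huv
      have := (ih u huv).1 hu
      omega

theorem isGammaPSet_pathGraph_one_iff [NeZero n] (hn : 3 ∣ n) {S : Set (Fin n)} :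
    IsGammaPSet (pathGraph n) 1 S ↔ S = residueClass n 1 := by
  have htight : IsTightPacking (pathGraph n) 3 (residueClass n 1) := by
    refine isTightPacking_of_subset_residueClass subset_rfl fun u (hu : u.val % 3 = 1) => ?_
    omega
  have hcard : 3 * (residueClass n 1).ncard = n := by
    rw [ncard_residueClass hn, Nat.mul_div_cancel' hn]
  have hgamma := isGammaPSet_iff_isTightPacking (S := S)
    ncard_closedNbhd_singleton_pathGraph_le_three htight
  rw [hcard, Fintype.card_fin, div_self (Nat.cast_ne_zero.2 (NeZero.ne n))] at hgamma
  rw [hgamma]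
  refine ⟨fun ⟨hS, hSn⟩ => ?_, by rintro rfl; exact ⟨htight, rfl⟩⟩
  refine hS.isPacking.eq_residueClass_one ?_ fun u hu =>
    (ncard_closedNbhd_singleton_pathGraph_eq_three_iff.1 (hS.ncard_closedNbhd_singleton u hu)).1
  refine Set.eq_of_subset_of_ncard_le (Set.subset_univ _) ?_
  calc
    (Set.univ : Set (Fin n)).ncard = 3 * S.ncard := by
      rw [Set.ncard_univ, Nat.card_fin, hSn, hcard]
    _ ≤ (closedNbhd (pathGraph n) S).ncard := hS.mul_ncard_le

end Path

/-- For `P_n` with `n ≡ 0 (mod 3)`.  Vertices of `pathGraph n` are `Fin n`,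
with `v_i` (1-based) corresponding to the index `i - 1` (0-based). -/
theorem stmt16 (n : ℕ) (hn : 3 ≤ n) (hmod : n % 3 = 0) :
    (∀ k : ℕ, 3 * k + 1 ≤ n →
      ((∀ v : Fin n, InInfluence (pathGraph n) ((3 * k + 1 : ℝ) / (n : ℝ)) v) ∧
        (3 * k + 2 ≤ n →
          ∀ v : Fin n, InInfluence (pathGraph n) ((3 * k + 2 : ℝ) / (n : ℝ)) v))) ∧
    (∀ k : ℕ, 1 ≤ k → 3 * k < n →
      ∀ v : Fin n, InInfluence (pathGraph n) ((3 * k : ℝ) / (n : ℝ)) v ↔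
        1 ≤ v.val ∧ v.val ≤ n - 2) ∧
    (∀ v : Fin n, InInfluence (pathGraph n) 1 v ↔ v.val % 3 = 1) := by
  have : NeZero n := ⟨by omega⟩
  have hdvd : 3 ∣ n := Nat.dvd_of_mod_eq_zero hmod
  refine ⟨fun k hk => ⟨fun v => ?_, fun hk2 v => ?_⟩, fun k hk hkn v => ?_, fun v => ?_⟩
  · exact_mod_cast inInfluence_pathGraph_of_not_dvd hdvd (q := 3 * k + 1) (by omega) hk v
  · exact_mod_cast inInfluence_pathGraph_of_not_dvd hdvd (q := 3 * k + 2) (by omega) hk2 v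
  · exact_mod_cast inInfluence_pathGraph_three_mul_iff hdvd hk hkn
  · simp only [InInfluence, isGammaPSet_pathGraph_one_iff hdvd, exists_eq_left]
    rfl
end
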